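/- Let D : [0, ∞) → [0, ∞) be increasing with D(0) = 0, D(t) → ∞ as t → ∞, and such that D(t)/t decreases monotonically to 0 as t → ∞. Let (Ω, μ) be a probability space, T : Ω → Ω an ergodic measure-preserving transformation, and f : Ω → ℝ a measurable function with ∫_Ω D(|f|) dμ < ∞. Then for μ-a.e. ω ∈ Ω, lim_{N→∞} (1/N) D( | f(ω) + f(Tω) + ⋯ + f(T^{N−1}ω) | ) = 0. -/

import Mathlib

open MeasureTheory Filter Topology

/-- The running maximum `max (0, S₁ g, …, Sₙ g)` of the Birkhoff sums of `g`, defined recursively. -/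
noncomputable def birkhoffMax {Ω : Type*} (T : Ω → Ω) (g : Ω → ℝ) : ℕ → Ω → ℝ
  | 0 => fun _ => 0
  | n + 1 => fun ω => max 0 (g ω + birkhoffMax T g n (T ω))

section BirkhoffMax

variable {Ω : Type*} {T : Ω → Ω} {g : Ω → ℝ}

lemma birkhoffMax_nonneg (n : ℕ) (ω : Ω) : 0 ≤ birkhoffMax T g n ω := by
  cases n with
  | zero => exact le_rfl
  | succ n => exact le_max_left _ _

lemma birkhoffMax_le_succ (n : ℕ) (ω : Ω) :
    birkhoffMax T g n ω ≤ birkhoffMax T g (n + 1) ω := by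
  induction n generalizing ω with
  | zero => exact birkhoffMax_nonneg 1 ω
  | succ n ih => exact max_le_max le_rfl (add_le_add le_rfl (ih (T ω)))

lemma birkhoffSum_le_birkhoffMax (n : ℕ) (ω : Ω) :
    birkhoffSum T g n ω ≤ birkhoffMax T g n ω := by
  induction n generalizing ω with
  | zero => simp [birkhoffMax]
  | succ n ih =>
    rw [birkhoffSum_succ']
    exact (add_le_add le_rfl (ih (T ω))).trans (le_max_right _ _)

lemma birkhoffMax_le_of_pos {n : ℕ} {ω : Ω} (h : 0 < birkhoffMax T g n ω) :
    birkhoffMax T g n ω ≤ g ω + birkhoffMax T g n (T ω) := by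
  have hle := birkhoffMax_le_succ (T := T) (g := g) n ω
  rcases le_max_iff.1 hle with h0 | h1
  · exact absurd h h0.not_gt
  · exact h1

variable [MeasurableSpace Ω] {μ : Measure Ω}

lemma measurable_birkhoffMax (hT : Measurable T) (hg : Measurable g) (n : ℕ) :
    Measurable (birkhoffMax T g n) := by
  induction n with
  | zero => exact measurable_const
  | succ n ih => exact measurable_const.max (hg.add (ih.comp hT))

lemma integrable_birkhoffMax (hT : MeasurePreserving T μ μ) (hg : Integrable g μ) (n : ℕ) :
    Integrable (birkhoffMax T g n) μ := by
  induction n with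
  | zero => exact integrable_zero _ _ _
  | succ n ih =>
    exact (integrable_zero Ω ℝ μ).sup (hg.add (hT.integrable_comp_of_integrable ih))

/-- **Maximal ergodic theorem.** -/
lemma setIntegral_birkhoffMax_pos_nonneg (hT : MeasurePreserving T μ μ) (hgm : Measurable g)
    (hg : Integrable g μ) (n : ℕ) :
    0 ≤ ∫ ω in {ω | 0 < birkhoffMax T g n ω}, g ω ∂μ := by
  set M := birkhoffMax T g n with hM
  have hMm : Measurable M := measurable_birkhoffMax hT.measurable hgm n
  have hMi : Integrable M μ := integrable_birkhoffMax hT hg n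
  have hMTi : Integrable (fun ω => M (T ω)) μ := hT.integrable_comp_of_integrable hMi
  have hs : MeasurableSet {ω | 0 < M ω} := measurableSet_lt measurable_const hMm
  have hMT : ∫ ω, M (T ω) ∂μ = ∫ ω, M ω ∂μ := by
    conv_rhs => rw [← hT.map_eq]
    exact (integral_map hT.measurable.aemeasurable hMm.aestronglyMeasurable).symm
  have hle : ∫ ω, (M ω - M (T ω)) ∂μ ≤ ∫ ω, {ω | 0 < M ω}.indicator g ω ∂μ := by
    refine integral_mono (hMi.sub hMTi) (hg.indicator hs) fun ω => ?_
    by_cases h : 0 < M ω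
    · have := birkhoffMax_le_of_pos h
      simp only [Set.indicator, Set.mem_ofPred_eq, h, if_true]
      linarith
    · have := birkhoffMax_nonneg (T := T) (g := g) n (T ω)
      simp only [Set.indicator, Set.mem_ofPred_eq, h, if_false]
      linarith
  rw [integral_sub hMi hMTi, hMT, sub_self, integral_indicator hs] at hle
  exact hle

/-- Weak-type maximal inequality for the Birkhoff averages of a nonnegative function. -/
lemma measure_exists_lt_birkhoffSum_le [IsProbabilityMeasure μ] (hT : MeasurePreserving T μ μ)
    (hgm : Measurable g) (hg : Integrable g μ) (hg0 : ∀ ω, 0 ≤ g ω) {ε : ℝ} (hε : 0 < ε) :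
    μ {ω | ∃ n : ℕ, n * ε < birkhoffSum T g n ω} ≤ ENNReal.ofReal ((∫ ω, g ω ∂μ) / ε) := by
  set G : Ω → ℝ := fun ω => g ω - ε
  have hGm : Measurable G := hgm.sub_const ε
  have hGi : Integrable G μ := hg.sub (integrable_const ε)
  have hsub : {ω | ∃ n : ℕ, n * ε < birkhoffSum T g n ω} ⊆
      ⋃ n, {ω | 0 < birkhoffMax T G n ω} := by
    rintro ω ⟨n, hn⟩
    refine Set.mem_iUnion.2 ⟨n, lt_of_lt_of_le ?_ (birkhoffSum_le_birkhoffMax n ω)⟩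
    simp only [birkhoffSum, G, Finset.sum_sub_distrib, Finset.sum_const, Finset.card_range,
      nsmul_eq_mul] at hn ⊢
    linarith
  have hmono : Monotone fun n => {ω | 0 < birkhoffMax T G n ω} :=
    monotone_nat_of_le_succ fun n ω (hω : 0 < _) => lt_of_lt_of_le hω (birkhoffMax_le_succ n ω)
  refine (measure_mono hsub).trans ?_
  rw [hmono.measure_iUnion]
  refine iSup_le fun n => ?_
  rw [← ofReal_measureReal]
  refine ENNReal.ofReal_le_ofReal ((le_div_iff₀ hε).2 ?_)
  have h := setIntegral_birkhoffMax_pos_nonneg hT hGm hGi n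
  rw [integral_sub hg.integrableOn (integrable_const ε), setIntegral_const, smul_eq_mul] at h
  have h' := setIntegral_le_integral (s := {ω | 0 < birkhoffMax T G n ω}) hg
    (Eventually.of_forall hg0)
  linarith

end BirkhoffMax

lemma add_le_of_antitoneOn_div {D : ℝ → ℝ} (hD0 : D 0 = 0)
    (hanti : AntitoneOn (fun t => D t / t) (Set.Ioi (0 : ℝ))) {s t : ℝ} (hs : 0 ≤ s)
    (ht : 0 ≤ t) : D (s + t) ≤ D s + D t := by
  rcases hs.eq_or_lt with rfl | hs
  · simp [hD0]
  rcases ht.eq_or_lt with rfl | ht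
  · simp [hD0]
  have hst : 0 < s + t := add_pos hs ht
  have h1 : D (s + t) / (s + t) ≤ D s / s := hanti hs hst (by linarith)
  have h2 : D (s + t) / (s + t) ≤ D t / t := hanti ht hst (by linarith)
  rw [le_div_iff₀ hs] at h1
  rw [le_div_iff₀ ht] at h2
  have h3 : D (s + t) / (s + t) * (s + t) = D (s + t) := div_mul_cancel₀ _ hst.ne'
  linarith

/-- A monotone subadditive `D` of a sum is controlled by the number of terms that are at most `K`
in absolute value, and by the values of `D` at the others. -/
lemma apply_abs_sum_le_of_truncation {D : ℝ → ℝ} (hmono : MonotoneOn D (Set.Ici 0)) (hD0 : D 0 = 0)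
    (hadd : ∀ s t : ℝ, 0 ≤ s → 0 ≤ t → D (s + t) ≤ D s + D t) {K : ℝ} (hK : 0 ≤ K)
    (a : ℕ → ℝ) (n : ℕ) :
    D |∑ i ∈ Finset.range n, a i| ≤
      D (n * K) + ∑ i ∈ Finset.range n, if K < |a i| then D |a i| else 0 := by
  set b : ℕ → ℝ := fun i => if K < |a i| then |a i| else 0 with hb
  have hb0 : ∀ i, 0 ≤ b i := fun i => by simp only [hb]; split_ifs <;> positivity
  have hsum0 : ∀ n, 0 ≤ ∑ i ∈ Finset.range n, b i := fun n => Finset.sum_nonneg fun i _ => hb0 i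
  have habs : |∑ i ∈ Finset.range n, a i| ≤ n * K + ∑ i ∈ Finset.range n, b i := by
    calc |∑ i ∈ Finset.range n, a i| ≤ ∑ i ∈ Finset.range n, |a i| := Finset.abs_sum_le_sum_abs _ _
      _ ≤ ∑ i ∈ Finset.range n, (K + b i) := Finset.sum_le_sum fun i _ => by
          simp only [hb]; split_ifs <;> linarith
      _ = _ := by simp [Finset.sum_add_distrib]
  have hnK : 0 ≤ n * K := by positivity
  have hDsum : ∀ n, D (∑ i ∈ Finset.range n, b i) ≤ ∑ i ∈ Finset.range n, D (b i) := by
    intro n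
    induction n with
    | zero => simp [hD0]
    | succ n ih =>
      rw [Finset.sum_range_succ, Finset.sum_range_succ]
      linarith [hadd _ _ (hsum0 n) (hb0 n)]
  have hDb : ∀ i, D (b i) = if K < |a i| then D |a i| else 0 := fun i => by
    simp only [hb]; split_ifs <;> simp [hD0]
  calc _ ≤ D (n * K + ∑ i ∈ Finset.range n, b i) :=
        hmono (Set.mem_Ici.2 (abs_nonneg _)) (Set.mem_Ici.2 (add_nonneg hnK (hsum0 n))) habs
    _ ≤ D (n * K) + D (∑ i ∈ Finset.range n, b i) := hadd _ _ hnK (hsum0 n)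
    _ ≤ _ := by
      simp only [← hDb]
      linarith [hDsum n]

/-- **Noncommutative ergodic theorem for `D`-integrable functions (Aaronson /
Karlsson–Monod).** -/
theorem birkhoff_sum_D_sublinear
    {Ω : Type*} [MeasurableSpace Ω] {μ : Measure Ω} [IsProbabilityMeasure μ]
    {T : Ω → Ω} (hT : Ergodic T μ)
    (D : ℝ → ℝ)
    (hmono : MonotoneOn D (Set.Ici 0)) (hD0 : D 0 = 0)
    (hDnonneg : ∀ t : ℝ, 0 ≤ t → 0 ≤ D t)
    (hDinf : Tendsto D atTop atTop)
    (hratio_anti : AntitoneOn (fun t => D t / t) (Set.Ioi (0 : ℝ)))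
    (hratio_zero : Tendsto (fun t => D t / t) atTop (𝓝 0))
    (f : Ω → ℝ) (hf : Measurable f)
    (hint : Integrable (fun ω => D |f ω|) μ) :
    ∀ᵐ ω ∂μ,
      Tendsto
        (fun N : ℕ => D |∑ i ∈ Finset.range N, f (T^[i] ω)| / (N : ℝ))
        atTop (𝓝 0) := by
  have hadd : ∀ s t : ℝ, 0 ≤ s → 0 ≤ t → D (s + t) ≤ D s + D t :=
    fun s t hs ht => add_le_of_antitoneOn_div hD0 hratio_anti hs ht
  have hDm : Measurable fun ω => D |f ω| := by
    have hmax : Monotone fun t => D (max 0 t) := fun s t hst =>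
      hmono (Set.mem_Ici.2 (le_max_left _ _)) (Set.mem_Ici.2 (le_max_left _ _)) (max_le_max le_rfl hst)
    simpa [Function.comp_def] using hmax.measurable.comp hf.abs
  let ψ : ℕ → Ω → ℝ := fun K ω => if (K : ℝ) < |f ω| then D |f ω| else 0
  have hψm : ∀ K, Measurable (ψ K) := fun K =>
    Measurable.ite (measurableSet_lt measurable_const hf.abs) hDm measurable_const
  have hψ0 : ∀ K ω, 0 ≤ ψ K ω := fun K ω => by
    simp only [ψ]; split_ifs
    exacts [hDnonneg _ (abs_nonneg _), le_rfl]
  have hψle : ∀ K ω, ‖ψ K ω‖ ≤ D |f ω| := fun K ω => by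
    rw [Real.norm_of_nonneg (hψ0 K ω)]
    simp only [ψ]; split_ifs
    exacts [le_rfl, hDnonneg _ (abs_nonneg _)]
  have hψi : ∀ K, Integrable (ψ K) μ := fun K =>
    hint.mono' (hψm K).aestronglyMeasurable (Eventually.of_forall (hψle K))
  have hψlim : Tendsto (fun K => ∫ ω, ψ K ω ∂μ) atTop (𝓝 0) := by
    have h := tendsto_integral_of_dominated_convergence (μ := μ) (F := ψ) (f := fun _ => (0 : ℝ))
      (fun ω => D |f ω|) (fun K => (hψm K).aestronglyMeasurable) hint
      (fun K => Eventually.of_forall (hψle K)) (Eventually.of_forall fun ω => by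
        refine tendsto_const_nhds.congr' ?_
        filter_upwards [(tendsto_natCast_atTop_atTop (R := ℝ)).eventually_ge_atTop |f ω|]
          with K hK
        simp [ψ, hK.not_gt])
    simpa using h
  have hDlin : ∀ K : ℕ, Tendsto (fun N : ℕ => D (N * (K : ℝ)) / N) atTop (𝓝 0) := by
    intro K
    rcases K.eq_zero_or_pos with rfl | hK
    · simp [hD0]
    have hK' : (0 : ℝ) < K := Nat.cast_pos.2 hK
    have h := (hratio_zero.comp
      ((tendsto_natCast_atTop_atTop (R := ℝ)).atTop_mul_const hK')).mul_const (K : ℝ)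
    rw [zero_mul] at h
    refine h.congr fun N => ?_
    simp only [Function.comp_apply]
    field_simp
  have key : ∀ ε : ℝ, 0 < ε → ∀ᵐ ω ∂μ, ∀ᶠ N : ℕ in atTop,
      D |∑ i ∈ Finset.range N, f (T^[i] ω)| / (N : ℝ) < ε := by
    intro ε hε
    have hε2 : 0 < ε / 2 := half_pos hε
    have hbound : ∀ K, μ {ω | ¬ ∀ᶠ N : ℕ in atTop,
        D |∑ i ∈ Finset.range N, f (T^[i] ω)| / (N : ℝ) < ε} ≤
        ENNReal.ofReal ((∫ ω, ψ K ω ∂μ) / (ε / 2)) := by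
      intro K
      refine (measure_mono ?_).trans (measure_exists_lt_birkhoffSum_le hT.toMeasurePreserving
        (hψm K) (hψi K) (hψ0 K) hε2)
      intro ω hω
      by_contra hcon
      refine hω ?_
      have hcon' : ∀ n : ℕ, birkhoffSum T (ψ K) n ω ≤ n * (ε / 2) := by
        simpa using hcon
      filter_upwards [(hDlin K).eventually_lt_const hε2, eventually_gt_atTop 0] with N hN hN0
      have hN' : (0 : ℝ) < N := Nat.cast_pos.2 hN0
      have htrunc := apply_abs_sum_le_of_truncation hmono hD0 hadd (Nat.cast_nonneg K)
        (fun i => f (T^[i] ω)) N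
      have hsum : ∑ i ∈ Finset.range N,
          (if (K : ℝ) < |f (T^[i] ω)| then D |f (T^[i] ω)| else 0) ≤ N * (ε / 2) := hcon' N
      rw [div_lt_iff₀ hN'] at hN ⊢
      linarith
    have hlim : Tendsto (fun K => ENNReal.ofReal ((∫ ω, ψ K ω ∂μ) / (ε / 2))) atTop (𝓝 0) := by
      simpa using ENNReal.tendsto_ofReal (hψlim.div_const (ε / 2))
    exact le_antisymm (ge_of_tendsto' hlim hbound) zero_le
  have hall : ∀ᵐ ω ∂μ, ∀ m : ℕ, ∀ᶠ N : ℕ in atTop,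
      D |∑ i ∈ Finset.range N, f (T^[i] ω)| / (N : ℝ) < 1 / ((m : ℝ) + 1) :=
    ae_all_iff.2 fun m => key _ Nat.one_div_pos_of_nat
  filter_upwards [hall] with ω hω
  refine tendsto_order.2 ⟨fun a ha => Eventually.of_forall fun N => ha.trans_le ?_, fun a ha => ?_⟩
  · exact div_nonneg (hDnonneg _ (abs_nonneg _)) (Nat.cast_nonneg N)
  · obtain ⟨m, hm⟩ := exists_nat_one_div_lt ha
    exact (hω m).mono fun N hN => hN.trans hm
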